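/- The limit lim_{ε→0⁺} ∫₀¹ π( Ω(γ_ε(s))⁻¹ · (d/ds)[Ω(γ_ε(s))] ) ds exists; in fact it equals the value ∫₀¹ t(γ_ε(s))⁻¹ · (d/ds)[t(γ_ε(s))] ds, which is the same for every ε ∈ (0,r). -/

import Mathlib

/-- The circle of radius `ε` around the origin of `ℝ²`, parametrized by `[0,1]`. -/
noncomputable def circleLoop (ε s : ℝ) : ℝ × ℝ :=
  (ε * Real.cos (2 * Real.pi * s), ε * Real.sin (2 * Real.pi * s))

/-- The open disc `B_r` of (Euclidean) radius `r` around `0 ∈ ℝ²`. -/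
def openDisc (r : ℝ) : Set (ℝ × ℝ) :=
  {x | x.1 ^ 2 + x.2 ^ 2 < r ^ 2}

/-- The punctured open disc `B_r \ {0}` of (Euclidean) radius `r` around `0 ∈ ℝ²`. -/
def puncturedDisc (r : ℝ) : Set (ℝ × ℝ) :=
  {x | x.1 ^ 2 + x.2 ^ 2 < r ^ 2 ∧ x ≠ 0}

/-!
The left logarithmic derivative of `Ω = Ω₀ t` is `t⁻¹ (Ω₀⁻¹ dΩ₀) t + t⁻¹ dt`, so its projection is
that of `Ω₀⁻¹ dΩ₀`, plus `t⁻¹ dt`. The loop integral of `Ω₀⁻¹ dΩ₀` is continuous in `ε` up to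
`ε = 0`, where the loop is constant and the integral vanishes. As the values of `t` commute,
`t⁻¹ dt` integrates along a closed loop to an element with exponential `1`; commuting elements with
this property form a discrete set, because `0` is an isolated solution of `exp z = 1`. Hence the
integral, which depends continuously on `ε ∈ (0, r)`, is constant.
-/

open Filter Set Topology
open scoped Ring

section LeftLogDeriv

variable {A : Type*} [NormedRing A] [NormedAlgebra ℝ A]

/-- The left logarithmic derivative `g⁻¹ g'` of a curve `g` in a Banach algebra. It is meant for
differentiable curves of units: the ring inverse of a non-unit is `0`, and so is the derivative at
a point of non-differentiability. -/
noncomputable def leftLogDeriv (g : ℝ → A) (s : ℝ) : A :=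
  (g s)⁻¹ʳ * deriv g s

theorem leftLogDeriv_const (a : A) (s : ℝ) : leftLogDeriv (fun _ => a) s = 0 := by
  rw [leftLogDeriv, deriv_const, mul_zero]

theorem mul_leftLogDeriv {g : ℝ → A} {s : ℝ} (hu : IsUnit (g s)) :
    g s * leftLogDeriv g s = deriv g s :=
  Ring.mul_inverse_cancel_left _ _ hu

theorem leftLogDeriv_mul {g h : ℝ → A} {s : ℝ} (hg : DifferentiableAt ℝ g s)
    (hh : DifferentiableAt ℝ h s) (hgu : IsUnit (g s)) (hhu : IsUnit (h s)) :
    leftLogDeriv (fun u => g u * h u) s =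
      (h s)⁻¹ʳ * leftLogDeriv g s * h s + leftLogDeriv h s := by
  rw [leftLogDeriv, Ring.inverse_mul_eq_iff_eq_mul _ _ _ (hgu.mul hhu), deriv_fun_mul hg hh]
  simp only [mul_add, mul_assoc, Ring.mul_inverse_cancel_left _ _ hhu]
  rw [← mul_assoc, mul_leftLogDeriv hgu, mul_leftLogDeriv hhu]

theorem commute_leftLogDeriv {c : A} {g : ℝ → A} {s : ℝ} (hd : DifferentiableAt ℝ g s)
    (hu : IsUnit (g s)) (hc : ∀ u, Commute c (g u)) : Commute c (leftLogDeriv g s) := by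
  have commute_deriv : Commute c (deriv g s) := by
    rw [Commute, SemiconjBy, ← deriv_const_mul c hd, ← deriv_mul_const hd c]
    exact congrArg (deriv · s) (funext hc)
  obtain ⟨v, hv⟩ := hu
  have commute_inverse : Commute c (g s)⁻¹ʳ := by
    rw [← hv, Ring.inverse_unit]
    exact (hv ▸ hc s : Commute c v).units_inv_right
  exact commute_inverse.mul_right commute_deriv

theorem commute_leftLogDeriv_leftLogDeriv {g h : ℝ → A} {s u : ℝ} (hg : DifferentiableAt ℝ g s)
    (hh : DifferentiableAt ℝ h u) (hgu : IsUnit (g s)) (hhu : IsUnit (h u))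
    (hc : ∀ v w, Commute (g v) (h w)) : Commute (leftLogDeriv g s) (leftLogDeriv h u) :=
  commute_leftLogDeriv hh hhu fun w => (commute_leftLogDeriv hg hgu fun v => (hc v w).symm).symm

end LeftLogDeriv

section Homotopy

variable {A : Type*} [NormedRing A] [NormedAlgebra ℝ A] [CompleteSpace A]

theorem commute_intervalIntegral {c : A} {f : ℝ → A} {a b : ℝ} (hf : Continuous f)
    (hc : ∀ s, Commute c (f s)) : Commute c (∫ s in a..b, f s) := by
  have hint := hf.intervalIntegrable (μ := MeasureTheory.volume) a b
  calc c * ∫ s in a..b, f s = ∫ s in a..b, c * f s :=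
        ((ContinuousLinearMap.mul ℝ A c).intervalIntegral_comp_comm hint).symm
    _ = ∫ s in a..b, f s * c := by simp only [(hc _).eq]
    _ = (∫ s in a..b, f s) * c :=
        ((ContinuousLinearMap.mul ℝ A).flip c).intervalIntegral_comp_comm hint

theorem hasDerivAt_exp_of_commute {f : ℝ → A} {f' : A} {s : ℝ} (hf : HasDerivAt f f' s)
    (hc : ∀ u, Commute (f s) (f u)) :
    HasDerivAt (fun u => NormedSpace.exp (f u)) (NormedSpace.exp (f s) * f') s := by
  let _ := NormedAlgebra.restrictScalars ℚ ℝ A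
  have exp_eq (u : ℝ) :
      NormedSpace.exp (f u) = NormedSpace.exp (f s) * NormedSpace.exp (f u - f s) := by
    rw [← NormedSpace.exp_add_of_commute ((hc u).sub_right (Commute.refl _)), add_sub_cancel]
  have hexp : HasFDerivAt NormedSpace.exp (1 : A →L[ℝ] A) (f s - f s) :=
    sub_self (f s) ▸ hasFDerivAt_exp_zero
  rw [funext exp_eq]
  exact (hexp.comp_hasDerivAt s (hf.sub_const (f s))).const_mul _

theorem mul_exp_integral_leftLogDeriv {g : ℝ → A} (hd : Differentiable ℝ g)
    (hu : ∀ s, IsUnit (g s)) (hc : ∀ s u, Commute (g s) (g u))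
    (hcont : Continuous (leftLogDeriv g)) (a b : ℝ) :
    g a * NormedSpace.exp (∫ s in a..b, leftLogDeriv g s) = g b := by
  let _ := NormedAlgebra.restrictScalars ℚ ℝ A
  let F (s : ℝ) : A := -∫ u in a..s, leftLogDeriv g u
  have hF (s : ℝ) : HasDerivAt F (-leftLogDeriv g s) s :=
    (hcont.integral_hasStrictDerivAt a s).hasDerivAt.neg
  have commute_F (s u : ℝ) : Commute (leftLogDeriv g s) (F u) :=
    (commute_intervalIntegral hcont fun v =>
      commute_leftLogDeriv_leftLogDeriv (hd s) (hd v) (hu s) (hu v) hc).neg_right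
  have commute_F_F (s u : ℝ) : Commute (F s) (F u) :=
    (commute_intervalIntegral hcont fun v => (commute_F v s).symm).neg_right
  have hderiv (s : ℝ) : HasDerivAt (fun u => g u * NormedSpace.exp (F u)) 0 s := by
    convert (hd s).hasDerivAt.fun_mul (hasDerivAt_exp_of_commute (hF s) (commute_F_F s)) using 1
    rw [mul_neg, mul_neg, ← (commute_F s s).exp_right.eq, ← mul_assoc, mul_leftLogDeriv (hu s),
      add_neg_cancel]
  have hconst : g b * NormedSpace.exp (F b) = g a * NormedSpace.exp (F a) :=
    is_const_of_deriv_eq_zero (fun s => (hderiv s).differentiableAt) (fun s => (hderiv s).deriv) b a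
  have hFa : F a = 0 := by simp only [F, intervalIntegral.integral_same, neg_zero]
  rw [hFa, NormedSpace.exp_zero, mul_one] at hconst
  rw [← hconst, mul_assoc, ← NormedSpace.exp_add_of_commute (Commute.refl _).neg_left,
    neg_add_cancel, NormedSpace.exp_zero, mul_one]

theorem exp_integral_leftLogDeriv_eq_one {g : ℝ → A} {a b : ℝ} (hd : Differentiable ℝ g)
    (hu : ∀ s, IsUnit (g s)) (hc : ∀ s u, Commute (g s) (g u))
    (hcont : Continuous (leftLogDeriv g)) (hab : g a = g b) :
    NormedSpace.exp (∫ s in a..b, leftLogDeriv g s) = 1 :=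
  (hu a).mul_left_cancel <| by rw [mul_exp_integral_leftLogDeriv hd hu hc hcont, mul_one, hab]

theorem isDiscrete_of_commute_of_exp_eq_one {T : Set A}
    (hc : ∀ x ∈ T, ∀ y ∈ T, Commute x y) (hexp : ∀ x ∈ T, NormedSpace.exp x = 1) :
    IsDiscrete T := by
  let _ := NormedAlgebra.restrictScalars ℚ ℝ A
  have exp_ne_one : ∀ᶠ z in 𝓝[≠] (0 : A), NormedSpace.exp z ≠ 1 :=
    (hasFDerivAt_exp_zero (𝕂 := ℝ)).eventually_ne ⟨1, AntilipschitzWith.id⟩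
  refine isDiscrete_iff_nhdsNE.mpr fun x hx => ?_
  have tendsto_sub : Tendsto (fun y => y - x) (𝓝[≠] x) (𝓝[≠] 0) := by
    simpa only [sub_self] using
      (hasFDerivAt_sub_const (𝕜 := ℝ) (x := x) x).tendsto_nhdsNE ⟨1, AntilipschitzWith.id⟩
  rw [← disjoint_iff, disjoint_principal_right]
  filter_upwards [tendsto_sub.eventually exp_ne_one] with y hne hy
  have exp_eq : NormedSpace.exp (y - x + x) = NormedSpace.exp (y - x) * NormedSpace.exp x :=
    NormedSpace.exp_add_of_commute ((hc y hy x hx).sub_left (Commute.refl x))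
  rw [sub_add_cancel, hexp y hy, hexp x hx, mul_one] at exp_eq
  exact hne exp_eq.symm

theorem integral_leftLogDeriv_eq_of_preconnectedSpace {X : Type*} [TopologicalSpace X]
    [PreconnectedSpace X] {g : X → ℝ → A} {a b : ℝ}
    (hd : ∀ x, Differentiable ℝ (g x)) (hu : ∀ x s, IsUnit (g x s))
    (hc : ∀ x y s u, Commute (g x s) (g y u)) (hloop : ∀ x, g x a = g x b)
    (hcont : Continuous fun p : X × ℝ => leftLogDeriv (g p.1) p.2) (x y : X) :
    ∫ s in a..b, leftLogDeriv (g x) s = ∫ s in a..b, leftLogDeriv (g y) s := by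
  let I (x : X) : A := ∫ s in a..b, leftLogDeriv (g x) s
  have hcont_curve (x : X) : Continuous (leftLogDeriv (g x)) :=
    hcont.comp (Continuous.prodMk_right x)
  have continuous_I : Continuous I :=
    intervalIntegral.continuous_parametric_intervalIntegral_of_continuous' hcont a b
  have commute_I (x y : X) : Commute (I x) (I y) :=
    commute_intervalIntegral (hcont_curve y) fun u =>
      (commute_intervalIntegral (hcont_curve x) fun s => commute_leftLogDeriv_leftLogDeriv
        (hd y u) (hd x s) (hu y u) (hu x s) (hc y x)).symm
  have exp_I (x : X) : NormedSpace.exp (I x) = 1 :=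
    exp_integral_leftLogDeriv_eq_one (hd x) (hu x) (hc x x) (hcont_curve x) (hloop x)
  have isDiscrete_range : IsDiscrete (range I) :=
    isDiscrete_of_commute_of_exp_eq_one (by rintro _ ⟨x, rfl⟩ _ ⟨y, rfl⟩; exact commute_I x y)
      (by rintro _ ⟨x, rfl⟩; exact exp_I x)
  exact isPreconnected_univ.constant_of_mapsTo isDiscrete_range continuous_I.continuousOn
    (fun x _ => mem_range_self x) (mem_univ x) (mem_univ y)

end Homotopy

section Pullback

variable {A : Type*} [NormedRing A] [NormedAlgebra ℝ A]
  {E : Type*} [NormedAddCommGroup E] [NormedSpace ℝ E]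

theorem leftLogDeriv_comp {f : E → A} {γ : ℝ → E} {s : ℝ} (hf : DifferentiableAt ℝ f (γ s))
    (hγ : DifferentiableAt ℝ γ s) :
    leftLogDeriv (fun u => f (γ u)) s = (f (γ s))⁻¹ʳ * fderiv ℝ f (γ s) (deriv γ s) := by
  rw [leftLogDeriv, ← fderiv_comp_deriv s hf hγ]
  rfl

theorem continuous_leftLogDeriv_comp [CompleteSpace A] {X : Type*} [TopologicalSpace X]
    {f : E → A} {U : Set E} (hU : IsOpen U) (hf : ContDiffOn ℝ 1 f U)
    (hu : ∀ x ∈ U, IsUnit (f x)) {γ : X → ℝ → E} (hγU : ∀ x s, γ x s ∈ U)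
    (hγd : ∀ x, Differentiable ℝ (γ x)) (hγ : Continuous fun p : X × ℝ => γ p.1 p.2)
    (hγ' : Continuous fun p : X × ℝ => deriv (γ p.1) p.2) :
    Continuous fun p : X × ℝ => leftLogDeriv (fun u => f (γ p.1 u)) p.2 := by
  have hfd (x : E) (hx : x ∈ U) : DifferentiableAt ℝ f x :=
    (hf.differentiableOn one_ne_zero).differentiableAt (hU.mem_nhds hx)
  simp only [leftLogDeriv_comp (hfd _ (hγU _ _)) (hγd _ _)]
  have continuousOn_inverse : ContinuousOn (fun x => (f x)⁻¹ʳ) U := fun x hx => by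
    obtain ⟨v, hv⟩ := hu x hx
    exact (hv ▸ NormedRing.inverse_continuousAt v).comp_continuousWithinAt (hf.continuousOn x hx)
  have continuousOn_fderiv : ContinuousOn (fderiv ℝ f) U :=
    hf.continuousOn_fderiv_of_isOpen hU le_rfl
  have hmem (p : X × ℝ) : γ p.1 p.2 ∈ U := hγU p.1 p.2
  exact (continuousOn_inverse.comp_continuous hγ hmem).mul
    ((continuousOn_fderiv.comp_continuous hγ hmem).clm_apply hγ')

end Pullback

section Circle

theorem differentiable_circleLoop (ε : ℝ) : Differentiable ℝ (circleLoop ε) := by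
  unfold circleLoop
  fun_prop

theorem deriv_circleLoop (ε s : ℝ) :
    deriv (circleLoop ε) s = (2 * Real.pi * ε) • (-Real.sin (2 * Real.pi * s),
      Real.cos (2 * Real.pi * s)) := by
  have hangle : HasDerivAt (fun s => 2 * Real.pi * s) (2 * Real.pi) s := by
    simpa using (hasDerivAt_id s).const_mul (2 * Real.pi)
  refine ((hangle.cos.const_mul ε).prodMk (hangle.sin.const_mul ε)).deriv.trans ?_
  ext <;> simp only [Prod.smul_mk, smul_eq_mul] <;> ring

theorem circleLoop_zero_left (s : ℝ) : circleLoop 0 s = 0 := by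
  simp [circleLoop]

theorem circleLoop_zero_right_eq_one (ε : ℝ) : circleLoop ε 0 = circleLoop ε 1 := by
  simp [circleLoop]

theorem circleLoop_fst_sq_add_snd_sq (ε s : ℝ) :
    (circleLoop ε s).1 ^ 2 + (circleLoop ε s).2 ^ 2 = ε ^ 2 := by
  simp only [circleLoop]
  linear_combination ε ^ 2 * Real.sin_sq_add_cos_sq (2 * Real.pi * s)

theorem circleLoop_mem_openDisc {r ε : ℝ} (hε : ε ∈ Ioo (-r) r) (s : ℝ) :
    circleLoop ε s ∈ openDisc r := by
  rw [openDisc, mem_ofPred_eq, circleLoop_fst_sq_add_snd_sq]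
  exact sq_lt_sq' hε.1 hε.2

theorem circleLoop_ne_zero {ε : ℝ} (hε : ε ≠ 0) (s : ℝ) : circleLoop ε s ≠ 0 := fun h =>
  pow_ne_zero 2 hε <| by simpa [h] using (circleLoop_fst_sq_add_snd_sq ε s).symm

theorem circleLoop_mem_puncturedDisc {r ε : ℝ} (hε : ε ∈ Ioo 0 r) (s : ℝ) :
    circleLoop ε s ∈ puncturedDisc r :=
  ⟨circleLoop_mem_openDisc ⟨by linarith [hε.1, hε.2], hε.2⟩ s, circleLoop_ne_zero hε.1.ne' s⟩

theorem isOpen_openDisc (r : ℝ) : IsOpen (openDisc r) :=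
  isOpen_lt (by fun_prop) continuous_const

theorem isOpen_puncturedDisc (r : ℝ) : IsOpen (puncturedDisc r) :=
  (isOpen_openDisc r).inter isOpen_compl_singleton

theorem puncturedDisc_subset_openDisc (r : ℝ) : puncturedDisc r ⊆ openDisc r :=
  fun _ hx => hx.1

variable {A : Type*} [NormedRing A] [NormedAlgebra ℝ A] [CompleteSpace A]

theorem differentiableAt_comp_circleLoop {F : Type*} [NormedAddCommGroup F] [NormedSpace ℝ F]
    {f : ℝ × ℝ → F} {U : Set (ℝ × ℝ)} {ε s : ℝ}
    (hU : IsOpen U) (hf : ContDiffOn ℝ 1 f U) (hs : circleLoop ε s ∈ U) :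
    DifferentiableAt ℝ (fun u => f (circleLoop ε u)) s :=
  ((hf.differentiableOn one_ne_zero).differentiableAt (hU.mem_nhds hs)).comp s
    (differentiable_circleLoop ε s)

theorem continuous_leftLogDeriv_comp_circleLoop {f : ℝ × ℝ → A} {U : Set (ℝ × ℝ)} {J : Set ℝ}
    (hU : IsOpen U) (hf : ContDiffOn ℝ 1 f U) (hu : ∀ x ∈ U, IsUnit (f x))
    (hJ : ∀ ε ∈ J, ∀ s, circleLoop ε s ∈ U) :
    Continuous fun p : J × ℝ => leftLogDeriv (fun u => f (circleLoop p.1 u)) p.2 := by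
  refine continuous_leftLogDeriv_comp hU hf hu (γ := fun ε : J => circleLoop ε)
    (fun ε s => hJ ε ε.2 s) (fun ε => differentiable_circleLoop ε) ?_ ?_
  · unfold circleLoop
    fun_prop
  · simp only [deriv_circleLoop]
    fun_prop

theorem continuous_leftLogDeriv_comp_circleLoop_of_mem_Ioo {f : ℝ × ℝ → A} {r ε : ℝ}
    (hf : ContDiffOn ℝ 1 f (puncturedDisc r)) (hu : ∀ x ∈ puncturedDisc r, IsUnit (f x))
    (hε : ε ∈ Ioo 0 r) : Continuous (leftLogDeriv fun u => f (circleLoop ε u)) :=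
  (continuous_leftLogDeriv_comp_circleLoop (isOpen_puncturedDisc r) hf hu
    fun _ => circleLoop_mem_puncturedDisc).comp (Continuous.prodMk_right (⟨ε, hε⟩ : Ioo 0 r))

theorem integral_leftLogDeriv_comp_circleLoop_eq {t : ℝ × ℝ → A} {r : ℝ}
    (ht : ContDiffOn ℝ 1 t (puncturedDisc r)) (htu : ∀ x ∈ puncturedDisc r, IsUnit (t x))
    (htc : ∀ x ∈ puncturedDisc r, ∀ y ∈ puncturedDisc r, Commute (t x) (t y))
    {ε δ : ℝ} (hε : ε ∈ Ioo 0 r) (hδ : δ ∈ Ioo 0 r) :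
    ∫ s in (0 : ℝ)..1, leftLogDeriv (fun u => t (circleLoop ε u)) s =
      ∫ s in (0 : ℝ)..1, leftLogDeriv (fun u => t (circleLoop δ u)) s := by
  have hmem (ε : Ioo 0 r) (s : ℝ) : circleLoop ε s ∈ puncturedDisc r :=
    circleLoop_mem_puncturedDisc ε.2 s
  have : PreconnectedSpace (Ioo 0 r) := Subtype.preconnectedSpace isPreconnected_Ioo
  exact integral_leftLogDeriv_eq_of_preconnectedSpace
    (g := fun (ε : Ioo 0 r) u => t (circleLoop ε u))
    (fun ε s => differentiableAt_comp_circleLoop (isOpen_puncturedDisc r) ht (hmem ε s))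
    (fun ε s => htu _ (hmem ε s)) (fun ε δ s u => htc _ (hmem ε s) _ (hmem δ u))
    (fun ε => congrArg t (circleLoop_zero_right_eq_one ε))
    (continuous_leftLogDeriv_comp_circleLoop (isOpen_puncturedDisc r) ht htu
      fun ε hε => circleLoop_mem_puncturedDisc hε) ⟨ε, hε⟩ ⟨δ, hδ⟩

theorem tendsto_integral_leftLogDeriv_comp_circleLoop_zero {f : ℝ × ℝ → A} {r : ℝ} (hr : 0 < r)
    (hf : ContDiffOn ℝ 1 f (openDisc r)) (hu : ∀ x ∈ openDisc r, IsUnit (f x)) :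
    Tendsto (fun ε => ∫ s in (0 : ℝ)..1, leftLogDeriv (fun u => f (circleLoop ε u)) s)
      (𝓝 0) (𝓝 0) := by
  have continuousOn_integral : ContinuousOn
      (fun ε => ∫ s in (0 : ℝ)..1, leftLogDeriv (fun u => f (circleLoop ε u)) s) (Ioo (-r) r) :=
    continuousOn_iff_continuous_domRestrict.mpr <|
      intervalIntegral.continuous_parametric_intervalIntegral_of_continuous'
        (continuous_leftLogDeriv_comp_circleLoop (isOpen_openDisc r) hf hu
          fun _ hε => circleLoop_mem_openDisc hε) 0 1
  have htendsto := (continuousOn_integral.continuousAt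
    (Ioo_mem_nhds (neg_lt_zero.mpr hr) hr)).tendsto
  simpa only [circleLoop_zero_left, leftLogDeriv_const, intervalIntegral.integral_zero]
    using htendsto

theorem integral_map_leftLogDeriv_mul_comp_circleLoop {P : A →L[ℝ] A} {f t : ℝ × ℝ → A} {r : ℝ}
    (hf : ContDiffOn ℝ 1 f (puncturedDisc r)) (hfu : ∀ x ∈ puncturedDisc r, IsUnit (f x))
    (ht : ContDiffOn ℝ 1 t (puncturedDisc r)) (htu : ∀ x ∈ puncturedDisc r, IsUnit (t x))
    (hconj : ∀ x ∈ puncturedDisc r, ∀ a, P ((t x)⁻¹ʳ * a * t x) = P a)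
    (hfix : ∀ x ∈ puncturedDisc r, ∀ v,
      P ((t x)⁻¹ʳ * fderiv ℝ t x v) = (t x)⁻¹ʳ * fderiv ℝ t x v)
    {ε : ℝ} (hε : ε ∈ Ioo 0 r) :
    ∫ s in (0 : ℝ)..1, P (leftLogDeriv (fun u => f (circleLoop ε u) * t (circleLoop ε u)) s) =
      P (∫ s in (0 : ℝ)..1, leftLogDeriv (fun u => f (circleLoop ε u)) s) +
        ∫ s in (0 : ℝ)..1, leftLogDeriv (fun u => t (circleLoop ε u)) s := by
  have hmem := circleLoop_mem_puncturedDisc hε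
  have hfd (s : ℝ) := differentiableAt_comp_circleLoop (isOpen_puncturedDisc r) hf (hmem s)
  have htd (s : ℝ) := differentiableAt_comp_circleLoop (isOpen_puncturedDisc r) ht (hmem s)
  have hf_cont := continuous_leftLogDeriv_comp_circleLoop_of_mem_Ioo hf hfu hε
  have ht_cont := continuous_leftLogDeriv_comp_circleLoop_of_mem_Ioo ht htu hε
  have hPf_cont : Continuous fun s => P (leftLogDeriv (fun u => f (circleLoop ε u)) s) :=
    P.continuous.comp hf_cont
  rw [← P.intervalIntegral_comp_comm (hf_cont.intervalIntegrable 0 1),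
    ← intervalIntegral.integral_add (hPf_cont.intervalIntegrable 0 1)
      (ht_cont.intervalIntegrable 0 1)]
  refine intervalIntegral.integral_congr fun s _ => ?_
  have hfix_loop : P (leftLogDeriv (fun u => t (circleLoop ε u)) s) =
      leftLogDeriv (fun u => t (circleLoop ε u)) s := by
    rw [leftLogDeriv_comp ((ht.differentiableOn one_ne_zero).differentiableAt
      ((isOpen_puncturedDisc r).mem_nhds (hmem s))) (differentiable_circleLoop ε s)]
    exact hfix _ (hmem s) _
  rw [leftLogDeriv_mul (hfd s) (htd s) (hfu _ (hmem s)) (htu _ (hmem s)), map_add,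
    hconj _ (hmem s), hfix_loop]

theorem tendsto_integral_map_leftLogDeriv_mul_comp_circleLoop {P : A →L[ℝ] A}
    {f t : ℝ × ℝ → A} {r : ℝ}
    (hf : ContDiffOn ℝ 1 f (openDisc r)) (hfu : ∀ x ∈ openDisc r, IsUnit (f x))
    (ht : ContDiffOn ℝ 1 t (puncturedDisc r)) (htu : ∀ x ∈ puncturedDisc r, IsUnit (t x))
    (htc : ∀ x ∈ puncturedDisc r, ∀ y ∈ puncturedDisc r, Commute (t x) (t y))
    (hconj : ∀ x ∈ puncturedDisc r, ∀ a, P ((t x)⁻¹ʳ * a * t x) = P a)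
    (hfix : ∀ x ∈ puncturedDisc r, ∀ v,
      P ((t x)⁻¹ʳ * fderiv ℝ t x v) = (t x)⁻¹ʳ * fderiv ℝ t x v)
    {δ : ℝ} (hδ : δ ∈ Ioo 0 r) :
    Tendsto (fun ε => ∫ s in (0 : ℝ)..1,
        P (leftLogDeriv (fun u => f (circleLoop ε u) * t (circleLoop ε u)) s))
      (𝓝[>] 0) (𝓝 (∫ s in (0 : ℝ)..1, leftLogDeriv (fun u => t (circleLoop δ u)) s)) := by
  have hr : 0 < r := hδ.1.trans hδ.2
  have hsub := puncturedDisc_subset_openDisc r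
  have tendsto_regular : Tendsto
      (fun ε => P (∫ s in (0 : ℝ)..1, leftLogDeriv (fun u => f (circleLoop ε u)) s))
      (𝓝[>] 0) (𝓝 0) :=
    map_zero P ▸ (P.continuous.tendsto 0).comp
      ((tendsto_integral_leftLogDeriv_comp_circleLoop_zero hr hf hfu).mono_left nhdsWithin_le_nhds)
  have htendsto := tendsto_regular.add_const
    (∫ s in (0 : ℝ)..1, leftLogDeriv (fun u => t (circleLoop δ u)) s)
  rw [zero_add] at htendsto
  refine htendsto.congr' ?_
  filter_upwards [Ioo_mem_nhdsGT hr] with ε hε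
  rw [integral_map_leftLogDeriv_mul_comp_circleLoop (hf.mono hsub) (fun x hx => hfu x (hsub hx))
    ht htu hconj hfix hε, integral_leftLogDeriv_comp_circleLoop_eq ht htu htc hε hδ]

end Circle

section Matrix

open scoped Matrix.Norms.Operator

variable {n 𝕜 : Type*} [RCLike 𝕜]
  {E : Type*} [NormedAddCommGroup E] [NormedSpace ℝ E]

theorem of_fderiv_apply [Finite n] {f : E → Matrix n n 𝕜} {x : E} (hf : DifferentiableAt ℝ f x)
    (v : E) :
    (Matrix.of fun i j => fderiv ℝ (fun y => f y i j) x v) = fderiv ℝ f x v := by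
  cases nonempty_fintype n
  ext i j
  let entry := (Matrix.entryLinearMap ℝ 𝕜 i j).toContinuousLinearMap
  exact DFunLike.congr_fun (entry.hasFDerivAt.comp x hf.hasFDerivAt).fderiv v

variable [Fintype n]

theorem contDiffOn_matrix {f : E → Matrix n n 𝕜} {U : Set E} {k : WithTop ℕ∞}
    (hf : ∀ i j, ContDiffOn ℝ k (fun x => f x i j) U) : ContDiffOn ℝ k f U :=
  have contDiff_of : ContDiff ℝ k (Matrix.of : (n → n → 𝕜) → Matrix n n 𝕜) :=
    (Matrix.ofLinearEquiv ℝ : (n → n → 𝕜) ≃ₗ[ℝ] Matrix n n 𝕜).toContinuousLinearEquiv.contDiff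
  contDiff_of.comp_contDiffOn (contDiffOn_pi.mpr fun i => contDiffOn_pi.mpr (hf i))

theorem inv_mul_of_deriv_eq_leftLogDeriv [DecidableEq n] {g : ℝ → Matrix n n 𝕜} {s : ℝ}
    (hg : DifferentiableAt ℝ g s) :
    ((g s)⁻¹ * Matrix.of fun i j => deriv (fun u => g u i j) s) = leftLogDeriv g s := by
  rw [leftLogDeriv, Matrix.nonsing_inv_eq_ringInverse]
  exact congrArg _ (of_fderiv_apply hg 1)

theorem of_intervalIntegral_apply {F : ℝ → Matrix n n 𝕜} {a b : ℝ} (hF : Continuous F) :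
    (Matrix.of fun i j => ∫ s in a..b, F s i j) = ∫ s in a..b, F s := by
  ext i j
  exact (Matrix.entryLinearMap ℝ 𝕜 i j).toContinuousLinearMap.intervalIntegral_comp_comm
    (hF.intervalIntegrable a b)

theorem of_integral_map_inv_mul_of_deriv [DecidableEq n] {P : Matrix n n 𝕜 →ₗ[ℝ] Matrix n n 𝕜}
    {g : ℝ → Matrix n n 𝕜} {a b : ℝ} (hd : Differentiable ℝ g)
    (hcont : Continuous (leftLogDeriv g)) :
    (Matrix.of fun i j => ∫ s in a..b,
      P ((g s)⁻¹ * Matrix.of fun i' j' => deriv (fun u => g u i' j') s) i j) =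
      ∫ s in a..b, P.toContinuousLinearMap (leftLogDeriv g s) := by
  simp only [inv_mul_of_deriv_eq_leftLogDeriv (hd _)]
  exact of_intervalIntegral_apply (P.toContinuousLinearMap.continuous.comp hcont)

end Matrix

theorem stmt_10_general {n 𝕜 : Type*} [Fintype n] [DecidableEq n] [RCLike 𝕜] {r : ℝ} (hr : 0 < r)
    {Ω₀ t : ℝ × ℝ → Matrix n n 𝕜}
    (hΩ₀s : ∀ i j, ContDiffOn ℝ 1 (fun x => Ω₀ x i j) (openDisc r))
    (hΩ₀u : ∀ x ∈ openDisc r, IsUnit (Ω₀ x))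
    (hts : ∀ i j, ContDiffOn ℝ 1 (fun x => t x i j) (puncturedDisc r))
    (htu : ∀ x ∈ puncturedDisc r, IsUnit (t x))
    (htc : ∀ x ∈ puncturedDisc r, ∀ y ∈ puncturedDisc r, t x * t y = t y * t x)
    {P : Matrix n n 𝕜 →ₗ[ℝ] Matrix n n 𝕜}
    (hconj : ∀ x ∈ puncturedDisc r, ∀ X : Matrix n n 𝕜, P ((t x)⁻¹ * X * t x) = P X)
    (hfix : ∀ x ∈ puncturedDisc r, ∀ v : ℝ × ℝ,
      P ((t x)⁻¹ * Matrix.of fun i j => fderiv ℝ (fun y => t y i j) x v) =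
        (t x)⁻¹ * Matrix.of fun i j => fderiv ℝ (fun y => t y i j) x v) :
    ∃ L : Matrix n n 𝕜,
      (∀ ε ∈ Ioo 0 r,
        (Matrix.of fun i j => ∫ s in (0 : ℝ)..1,
          ((t (circleLoop ε s))⁻¹ *
            Matrix.of fun i' j' => deriv (fun u => t (circleLoop ε u) i' j') s) i j) = L) ∧
      Tendsto
        (fun ε : ℝ => Matrix.of fun i j => ∫ s in (0 : ℝ)..1,
          P ((Ω₀ (circleLoop ε s) * t (circleLoop ε s))⁻¹ *
            Matrix.of fun i' j' =>
              deriv (fun u => (Ω₀ (circleLoop ε u) * t (circleLoop ε u)) i' j') s) i j)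
        (𝓝[>] 0) (𝓝 L) := by
  open scoped Matrix.Norms.Operator in
  have hpunct := isOpen_puncturedDisc r
  have hsub := puncturedDisc_subset_openDisc r
  have hmem (ε : ℝ) (hε : ε ∈ Ioo 0 r) (s : ℝ) := circleLoop_mem_puncturedDisc hε s
  have hΩ₀ := contDiffOn_matrix hΩ₀s
  have ht := contDiffOn_matrix hts
  have hΩ : ContDiffOn ℝ 1 (fun x => Ω₀ x * t x) (puncturedDisc r) := (hΩ₀.mono hsub).mul ht
  have hΩu (x) (hx : x ∈ puncturedDisc r) : IsUnit (Ω₀ x * t x) :=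
    (hΩ₀u x (hsub hx)).mul (htu x hx)
  have hr2 : r / 2 ∈ Ioo 0 r := ⟨half_pos hr, half_lt_self hr⟩
  refine ⟨∫ s in (0 : ℝ)..1, leftLogDeriv (fun u => t (circleLoop (r / 2) u)) s,
    fun ε hε => ?_, ?_⟩
  · rw [← integral_leftLogDeriv_comp_circleLoop_eq ht htu htc hε hr2]
    exact of_integral_map_inv_mul_of_deriv (P := .id)
      (fun s => differentiableAt_comp_circleLoop hpunct ht (hmem ε hε s))
      (continuous_leftLogDeriv_comp_circleLoop_of_mem_Ioo ht htu hε)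
  · refine (tendsto_integral_map_leftLogDeriv_mul_comp_circleLoop (P := P.toContinuousLinearMap)
      hΩ₀ hΩ₀u ht htu htc ?_ ?_ hr2).congr' ?_
    · simp only [Matrix.nonsing_inv_eq_ringInverse] at hconj
      exact hconj
    · intro x hx v
      have hfix_x := hfix x hx v
      rw [of_fderiv_apply ((ht.differentiableOn one_ne_zero).differentiableAt
        (hpunct.mem_nhds hx)), Matrix.nonsing_inv_eq_ringInverse] at hfix_x
      exact hfix_x
    · filter_upwards [Ioo_mem_nhdsGT hr] with ε hε
      exact (of_integral_map_inv_mul_of_deriv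
        (fun s => differentiableAt_comp_circleLoop hpunct hΩ (hmem ε hε s))
        (continuous_leftLogDeriv_comp_circleLoop_of_mem_Ioo hΩ hΩu hε)).symm

/-- With `Ω = Ω₀·t` (where `Ω₀` is smooth and invertible-valued on the
full disc `B_r`, and `t` is smooth with commuting invertible values on the punctured disc
`B_r^×`) and `π` a linear map on matrices which is invariant under conjugation by the
values of `t` and fixes the logarithmic derivatives of `t`, the limit
`lim_{ε→0⁺} ∫₀¹ π(Ω(γ_ε(s))⁻¹·(d/ds)[Ω(γ_ε(s))]) ds` exists; in fact it equals the
ε-independent value `∫₀¹ t(γ_ε(s))⁻¹·(d/ds)[t(γ_ε(s))] ds`. -/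
theorem stmt_10
    (N : ℕ) (hN : 0 < N) (r : ℝ) (hr : 0 < r)
    (Ω₀ : ℝ × ℝ → Matrix (Fin N) (Fin N) ℝ)
    (hΩ₀s : ∀ i j, ContDiffOn ℝ (⊤ : ℕ∞) (fun x => Ω₀ x i j) (openDisc r))
    (hΩ₀u : ∀ x ∈ openDisc r, IsUnit (Ω₀ x))
    (t : ℝ × ℝ → Matrix (Fin N) (Fin N) ℝ)
    (hts : ∀ i j, ContDiffOn ℝ (⊤ : ℕ∞) (fun x => t x i j) (puncturedDisc r))
    (htu : ∀ x ∈ puncturedDisc r, IsUnit (t x))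
    (htc : ∀ x ∈ puncturedDisc r, ∀ y ∈ puncturedDisc r, t x * t y = t y * t x)
    (π' : Matrix (Fin N) (Fin N) ℝ →ₗ[ℝ] Matrix (Fin N) (Fin N) ℝ)
    (hconj : ∀ x ∈ puncturedDisc r, ∀ X : Matrix (Fin N) (Fin N) ℝ,
      π' ((t x)⁻¹ * X * t x) = π' X)
    (hfix : ∀ x ∈ puncturedDisc r, ∀ v : ℝ × ℝ,
      π' ((t x)⁻¹ * Matrix.of fun i j => fderiv ℝ (fun y => t y i j) x v) =
        (t x)⁻¹ * Matrix.of fun i j => fderiv ℝ (fun y => t y i j) x v) :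
    ∃ L : Matrix (Fin N) (Fin N) ℝ,
      (∀ ε ∈ Set.Ioo (0 : ℝ) r,
        (Matrix.of fun i j => ∫ s in (0 : ℝ)..1,
          ((t (circleLoop ε s))⁻¹ *
            Matrix.of fun i' j' => deriv (fun u => t (circleLoop ε u) i' j') s) i j) = L) ∧
      Filter.Tendsto
        (fun ε : ℝ => Matrix.of fun i j => ∫ s in (0 : ℝ)..1,
          (π' ((Ω₀ (circleLoop ε s) * t (circleLoop ε s))⁻¹ *
            Matrix.of fun i' j' =>
              deriv (fun u => (Ω₀ (circleLoop ε u) * t (circleLoop ε u)) i' j') s)) i j)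
        (nhdsWithin 0 (Set.Ioi 0)) (nhds L) := by
  exact stmt_10_general hr (fun i j => (hΩ₀s i j).of_le (mod_cast le_top)) hΩ₀u
    (fun i j => (hts i j).of_le (mod_cast le_top)) htu htc hconj hfix
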